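/- Let F(x,y) = (y, -x + s(y)). The map F is pointwise periodic: every q ∈ ℝ² satisfies F^p(q) = q for some p ≥ 1. Moreover, the set of minimal periods of points of F equals {4n+1 : n ∈ ℕ₀} ∪ {8n+4 : n ∈ ℕ₀} ∪ {8n+6 : n ∈ ℕ₀}. -/

import Mathlib

noncomputable def s (y : ℝ) : ℝ := if 0 ≤ y then 1 else -1

noncomputable def F (q : ℝ × ℝ) : ℝ × ℝ := (q.2, -q.1 + s q.2)

open Function

theorem s_eq_of_iff {z : ℝ} {p : Prop} {σ : ℤ} (hz : 0 ≤ z ↔ p)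
    (hσ : p ∧ σ = 1 ∨ ¬p ∧ σ = 0) : s z = 2 * σ - 1 := by
  rcases hσ with ⟨hp, rfl⟩ | ⟨hp, rfl⟩
  · rw [s, if_pos (hz.2 hp)]; norm_num
  · rw [s, if_neg (fun h => hp (hz.1 h))]; norm_num

theorem exists_s_eq (z : ℝ) : ∃ e : ℤ, s z = 1 + 2 * e := by
  by_cases h : 0 ≤ z
  · exact ⟨0, by simp [s, h]⟩
  · exact ⟨-1, by rw [s, if_neg h]; norm_num⟩

theorem F_injective : Injective F := by
  rintro ⟨x, y⟩ ⟨x', y'⟩ h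
  simp only [F, Prod.mk.injEq] at h
  obtain ⟨rfl, h⟩ := h
  simpa using h

theorem exists_F_iterate_four_mul (k : ℕ) (q : ℝ × ℝ) :
    ∃ a b : ℤ, F^[4 * k] q = (q.1 + 2 * a, q.2 + 2 * b) := by
  induction k with
  | zero => exact ⟨0, 0, by simp⟩
  | succ k ih =>
    obtain ⟨a, b, h⟩ := ih
    rw [show 4 * (k + 1) = 4 + 4 * k by ring, iterate_add_apply, h]
    simp only [iterate_succ, iterate_zero, comp_apply, id_eq, F]
    obtain ⟨e₁, h₁⟩ := exists_s_eq (q.2 + 2 * b)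
    rw [h₁]
    obtain ⟨e₂, h₂⟩ := exists_s_eq (-(q.1 + 2 * a) + (1 + 2 * e₁))
    rw [h₂]
    obtain ⟨e₃, h₃⟩ := exists_s_eq (-(q.2 + 2 * b) + (1 + 2 * e₂))
    rw [h₃]
    obtain ⟨e₄, h₄⟩ := exists_s_eq (-(-(q.1 + 2 * a) + (1 + 2 * e₁)) + (1 + 2 * e₃))
    rw [h₄]
    refine ⟨a - e₁ + e₃, b - e₂ + e₄, ?_⟩
    push_cast
    ext <;> simp only <;> ring

theorem half_odd_of_mod_four_eq_two {p : ℕ} (hp : p % 4 = 2) {q : ℝ × ℝ}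
    (hq : F^[p] q = q) : ∃ a b : ℤ, 2 * q.1 = 1 + 2 * a ∧ 2 * q.2 = 1 + 2 * b := by
  obtain ⟨a, b, h⟩ := exists_F_iterate_four_mul (p / 4) q
  rw [show p = 2 + 4 * (p / 4) by omega, iterate_add_apply, h] at hq
  simp only [iterate_succ, iterate_zero, comp_apply, id_eq, F] at hq
  obtain ⟨e₁, h₁⟩ := exists_s_eq (q.2 + 2 * b)
  rw [h₁] at hq
  obtain ⟨e₂, h₂⟩ := exists_s_eq (-(q.1 + 2 * a) + (1 + 2 * e₁))
  rw [h₂] at hq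
  have hx := congrArg Prod.fst hq
  have hy := congrArg Prod.snd hq
  simp only at hx hy
  refine ⟨e₁ - a, e₂ - b, ?_, ?_⟩ <;> push_cast <;> linarith

theorem add_odd_of_mod_four_eq_three {p : ℕ} (hp : p % 4 = 3) {q : ℝ × ℝ}
    (hq : F^[p] q = q) : ∃ a : ℤ, q.1 + q.2 = 1 + 2 * a := by
  obtain ⟨a, b, h⟩ := exists_F_iterate_four_mul (p / 4) q
  rw [show p = 3 + 4 * (p / 4) by omega, iterate_add_apply, h] at hq
  simp only [iterate_succ, iterate_zero, comp_apply, id_eq, F] at hq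
  obtain ⟨e₁, h₁⟩ := exists_s_eq (q.2 + 2 * b)
  rw [h₁] at hq
  obtain ⟨e₂, h₂⟩ := exists_s_eq (-(q.1 + 2 * a) + (1 + 2 * e₁))
  rw [h₂] at hq
  have hx := congrArg Prod.fst hq
  simp only at hx
  refine ⟨e₂ - b, ?_⟩
  push_cast
  linarith

/-- `α` records on which side of `1` the residue `x ∈ [0, 2)` lies. -/
def IsSide (x : ℝ) (α : ℤ) : Prop :=
  0 ≤ x ∧ x < 2 ∧ (α = 1 ∧ x ≤ 1 ∨ α = 0 ∧ 1 < x)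

theorem IsSide.eq_zero_or_one {x : ℝ} {α : ℤ} (h : IsSide x α) : α = 0 ∨ α = 1 := by
  rcases h.2.2 with h | h <;> simp [h.1]

theorem exists_isSide_add (x : ℝ) : ∃ (x₀ : ℝ) (α i : ℤ), IsSide x₀ α ∧ x = x₀ + 2 * i := by
  have h1 := Int.floor_le (x / 2)
  have h2 := Int.lt_floor_add_one (x / 2)
  by_cases h : x - 2 * ⌊x / 2⌋ ≤ 1
  · exact ⟨x - 2 * ⌊x / 2⌋, 1, ⌊x / 2⌋,
      ⟨by linarith, by linarith, .inl ⟨rfl, h⟩⟩, by ring⟩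
  · exact ⟨x - 2 * ⌊x / 2⌋, 0, ⌊x / 2⌋,
      ⟨by linarith, by linarith, .inr ⟨rfl, not_le.1 h⟩⟩, by ring⟩

theorem IsSide.nonneg_add_iff {x : ℝ} {α : ℤ} (h : IsSide x α) (i : ℤ) :
    0 ≤ x + 2 * i ↔ 0 ≤ i := by
  obtain ⟨h0, h2, -⟩ := h
  constructor
  · intro hi
    have : (-1 : ℝ) < i := by linarith
    have : (-1 : ℤ) < i := by exact_mod_cast this
    omega
  · intro hi
    have : (0 : ℝ) ≤ i := by exact_mod_cast hi
    linarith

theorem IsSide.nonneg_sub_iff {x : ℝ} {α : ℤ} (h : IsSide x α) (i : ℤ) :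
    0 ≤ 1 - x - 2 * i ↔ i < α := by
  obtain ⟨h0, h2, ⟨rfl, h⟩ | ⟨rfl, h⟩⟩ := h
  · constructor
    · intro hi
      have : (i : ℝ) < 1 := by linarith
      exact_mod_cast this
    · intro hi
      have : (i : ℝ) ≤ 0 := by exact_mod_cast Int.lt_add_one_iff.1 hi
      linarith
  · constructor
    · intro hi
      have : (i : ℝ) < 0 := by linarith
      exact_mod_cast this
    · intro hi
      have : (i : ℝ) ≤ -1 := by exact_mod_cast (show i ≤ -1 by omega)
      linarith

/-- The action of `F^[4]` on a coset of `(2ℤ)²`. -/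
theorem F_iterate_four_add {x y : ℝ} {α β i j σ₁ σ₂ σ₃ σ₄ : ℤ} (hx : IsSide x α)
    (hy : IsSide y β) (h₁ : 0 ≤ j ∧ σ₁ = 1 ∨ ¬0 ≤ j ∧ σ₁ = 0)
    (h₂ : i + 1 - σ₁ < α ∧ σ₂ = 1 ∨ ¬i + 1 - σ₁ < α ∧ σ₂ = 0)
    (h₃ : j + 1 - σ₂ < β ∧ σ₃ = 1 ∨ ¬j + 1 - σ₂ < β ∧ σ₃ = 0)
    (h₄ : 0 ≤ i - σ₁ + σ₃ ∧ σ₄ = 1 ∨ ¬0 ≤ i - σ₁ + σ₃ ∧ σ₄ = 0) :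
    F^[4] (x + 2 * i, y + 2 * j) =
      (x + 2 * (i - σ₁ + σ₃ : ℤ), y + 2 * (j - σ₂ + σ₄ : ℤ)) := by
  have e₁ := s_eq_of_iff (hy.nonneg_add_iff j) h₁
  have e₂ := s_eq_of_iff (hx.nonneg_sub_iff (i + 1 - σ₁)) h₂
  have e₃ := s_eq_of_iff (hy.nonneg_sub_iff (j + 1 - σ₂)) h₃
  have e₄ := s_eq_of_iff (hx.nonneg_add_iff (i - σ₁ + σ₃)) h₄
  simp only [iterate_succ, iterate_zero, comp_apply, id_eq, F]
  rw [e₁, show -(x + 2 * i) + (2 * σ₁ - 1 : ℝ) = 1 - x - 2 * (i + 1 - σ₁ : ℤ) by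
      push_cast; ring, e₂,
    show -(y + 2 * j) + (2 * σ₂ - 1 : ℝ) = 1 - y - 2 * (j + 1 - σ₂ : ℤ) by
      push_cast; ring, e₃,
    show -(1 - x - 2 * (i + 1 - σ₁ : ℤ)) + (2 * σ₃ - 1 : ℝ) = x + 2 * (i - σ₁ + σ₃ : ℤ) by
      push_cast; ring, e₄]
  push_cast
  ext <;> simp only
  ring

/-- The position `(i, j)` at time `t` of the orbit under `F^[4]` that starts at `(0, m)`, in
coordinates on a coset of `(2ℤ)²`. -/
def OnPath (α β m t i j : ℤ) : Prop :=
  (t = 0 ∧ i = 0 ∧ j = m) ∨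
  (1 ≤ t ∧ t ≤ m + 1 - α ∧ i = -t ∧ j = m + 1 - α - t) ∨
  (m + 2 - α ≤ t ∧ t < 2 * m + 4 - 2 * α - β ∧
    i = t - (2 * m + 4 - 2 * α - β) ∧ j = m + 1 - α - t) ∨
  (2 * m + 4 - 2 * α - β ≤ t ∧ t < 3 * m + 5 - 2 * α - 2 * β ∧
    i = t - (2 * m + 4 - 2 * α - β) ∧ j = t - (3 * m + 5 - 2 * α - 2 * β)) ∨
  (3 * m + 5 - 2 * α - 2 * β ≤ t ∧ t ≤ 4 * m + 5 - 2 * α - 2 * β ∧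
    i = 4 * m + 5 - 2 * α - 2 * β - t ∧ j = t - (3 * m + 5 - 2 * α - 2 * β))

theorem exists_indicator (p : Prop) : ∃ σ : ℤ, p ∧ σ = 1 ∨ ¬p ∧ σ = 0 := by
  by_cases h : p <;> simp [h]

theorem OnPath.step {α β m t i j σ₁ σ₂ σ₃ σ₄ : ℤ} (hα : α = 0 ∨ α = 1) (hβ : β = 0 ∨ β = 1)
    (hm : 0 ≤ m) (ht : t < 4 * m + 5 - 2 * α - 2 * β) (h : OnPath α β m t i j)
    (h₁ : 0 ≤ j ∧ σ₁ = 1 ∨ ¬0 ≤ j ∧ σ₁ = 0)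
    (h₂ : i + 1 - σ₁ < α ∧ σ₂ = 1 ∨ ¬i + 1 - σ₁ < α ∧ σ₂ = 0)
    (h₃ : j + 1 - σ₂ < β ∧ σ₃ = 1 ∨ ¬j + 1 - σ₂ < β ∧ σ₃ = 0)
    (h₄ : 0 ≤ i - σ₁ + σ₃ ∧ σ₄ = 1 ∨ ¬0 ≤ i - σ₁ + σ₃ ∧ σ₄ = 0) :
    OnPath α β m (t + 1) (i - σ₁ + σ₃) (j - σ₂ + σ₄) := by
  unfold OnPath at *
  rcases hα with rfl | rfl <;> rcases hβ with rfl | rfl <;>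
    rcases h with h | h | h | h | h <;> rcases h₁ with h₁ | h₁ <;> rcases h₂ with h₂ | h₂ <;>
    rcases h₃ with h₃ | h₃ <;> rcases h₄ with h₄ | h₄ <;> omega

theorem exists_onPath {x y : ℝ} {α β : ℤ} (hx : IsSide x α) (hy : IsSide y β)
    (m : ℕ) {t : ℕ} (ht : (t : ℤ) ≤ 4 * m + 5 - 2 * α - 2 * β) :
    ∃ i j : ℤ, OnPath α β m t i j ∧
      (F^[4])^[t] (x, y + 2 * m) = (x + 2 * i, y + 2 * j) := by
  induction t with
  | zero => exact ⟨0, m, by simp [OnPath], by simp⟩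
  | succ t ih =>
    push_cast at ht
    obtain ⟨i, j, h, e⟩ := ih (by omega)
    obtain ⟨σ₁, h₁⟩ := exists_indicator (0 ≤ j)
    obtain ⟨σ₂, h₂⟩ := exists_indicator (i + 1 - σ₁ < α)
    obtain ⟨σ₃, h₃⟩ := exists_indicator (j + 1 - σ₂ < β)
    obtain ⟨σ₄, h₄⟩ := exists_indicator (0 ≤ i - σ₁ + σ₃)
    refine ⟨i - σ₁ + σ₃, j - σ₂ + σ₄, ?_, ?_⟩
    · push_cast
      exact h.step hx.eq_zero_or_one hy.eq_zero_or_one (by omega) (by omega) h₁ h₂ h₃ h₄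
    · rw [iterate_succ_apply', e, F_iterate_four_add hx hy h₁ h₂ h₃ h₄]

theorem F_iterate_eq_of_onPath {x y : ℝ} {α β : ℤ} (hx : IsSide x α) (hy : IsSide y β)
    (m : ℕ) {t : ℕ} {i j : ℤ} (h : OnPath α β m t i j) :
    F^[4 * t] (x, y + 2 * m) = (x + 2 * i, y + 2 * j) := by
  have hα := hx.eq_zero_or_one
  have hβ := hy.eq_zero_or_one
  obtain ⟨i', j', h', e⟩ := exists_onPath hx hy m (t := t) (by unfold OnPath at h; omega)
  obtain rfl : i' = i := by unfold OnPath at h h'; omega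
  obtain rfl : j' = j := by unfold OnPath at h h'; omega
  rw [iterate_mul, e]

theorem minimalPeriod_F_iterate_four {x y : ℝ} {α β : ℤ} (hx : IsSide x α) (hy : IsSide y β)
    (m : ℕ) :
    (minimalPeriod F^[4] (x, y + 2 * m) : ℤ) = 4 * m + 5 - 2 * α - 2 * β := by
  have hα := hx.eq_zero_or_one
  have hβ := hy.eq_zero_or_one
  obtain ⟨T, hT⟩ := Int.eq_ofNat_of_zero_le
    (show 0 ≤ 4 * (m : ℤ) + 5 - 2 * α - 2 * β by omega)
  have hper : IsPeriodicPt F^[4] T (x, y + 2 * m) := by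
    obtain ⟨i, j, h, e⟩ := exists_onPath hx hy m hT.ge
    obtain rfl : i = 0 := by unfold OnPath at h; omega
    obtain rfl : j = m := by unfold OnPath at h; omega
    simpa [IsPeriodicPt, IsFixedPt] using e
  have hle := hper.minimalPeriod_le (by omega)
  have hpos := hper.minimalPeriod_pos (by omega)
  obtain ⟨i, j, h, e⟩ := exists_onPath hx hy m
    (t := minimalPeriod F^[4] (x, y + 2 * m)) (by omega)
  rw [iterate_minimalPeriod, Prod.mk.injEq] at e
  have hi : i = 0 := by
    have : (i : ℝ) = 0 := by linarith [e.1]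
    exact_mod_cast this
  have hj : j = m := by
    have : (j : ℝ) = m := by linarith [e.2]
    exact_mod_cast this
  unfold OnPath at h
  omega

theorem exists_iterate_eq_or_isFixedPt {x y : ℝ} {α β : ℤ}
    (hx : IsSide x α) (hy : IsSide y β) (i j : ℤ) :
    (∃ m t : ℕ, (x + 2 * i, y + 2 * j) = F^[t] (x, y + 2 * m)) ∨
      F^[4] (x + 2 * i, y + 2 * j) = (x + 2 * i, y + 2 * j) := by
  have hα := hx.eq_zero_or_one
  have hβ := hy.eq_zero_or_one
  by_cases hc : α = 0 ∧ β = 0 ∧ i = -1 ∧ j = -1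
  · obtain ⟨rfl, rfl, rfl, rfl⟩ := hc
    right
    simpa using F_iterate_four_add (i := -1) (j := -1) (σ₁ := 0) (σ₂ := 0) (σ₃ := 0) (σ₄ := 0)
      hx hy (by norm_num) (by norm_num) (by norm_num) (by norm_num)
  · left
    suffices ∃ m t : ℤ, 0 ≤ m ∧ 0 ≤ t ∧ OnPath α β m t i j by
      obtain ⟨m, t, hm, ht, h⟩ := this
      lift m to ℕ using hm
      lift t to ℕ using ht
      exact ⟨m, 4 * t, (F_iterate_eq_of_onPath hx hy m h).symm⟩
    unfold OnPath
    rcases lt_or_ge i 0 with hi | hi <;> rcases lt_or_ge j 0 with hj | hj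
    · exact ⟨-3 - i - j + α + β, -2 - i - 2 * j + β, by omega, by omega, by omega⟩
    · exact ⟨j + α - i - 1, -i, by omega, by omega, by omega⟩
    · exact ⟨i - j - 1 + β, 3 * i - 2 * j + 2 - 2 * α + β, by omega, by omega, by omega⟩
    · rcases hi.eq_or_lt with rfl | hi
      · exact ⟨j, 0, by omega, by omega, by omega⟩
      · exact ⟨i + j, 3 * i + 4 * j + 5 - 2 * α - 2 * β, by omega, by omega, by omega⟩

theorem minimalPeriod_F_dvd_sub {q : ℝ × ℝ} {a b : ℕ} (hab : a ≤ b) (h : F^[b] q = F^[a] q) :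
    minimalPeriod F q ∣ b - a := by
  refine IsPeriodicPt.minimalPeriod_dvd (F_injective.iterate a ?_)
  rw [← iterate_add_apply, Nat.add_sub_cancel' hab, h]

theorem minimalPeriod_F_cases {q : ℝ × ℝ} {p P : ℕ} (hp : minimalPeriod F q = p)
    (hP : minimalPeriod F^[4] q = P) :
    (p % 4 = 0 ∧ p = 4 * P) ∨ (p % 4 = 2 ∧ p = 2 * P) ∨ (p % 2 = 1 ∧ p = P) := by
  rw [minimalPeriod_iterate_eq_div_gcd (by norm_num), hp, Nat.gcd_comm, Nat.gcd_rec] at hP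
  have : p % 4 < 4 := Nat.mod_lt _ (by norm_num)
  interval_cases h : p % 4 <;> norm_num at hP <;> omega

theorem mem_periodicPts_F {x y : ℝ} {α β : ℤ} (hx : IsSide x α) (hy : IsSide y β) (m : ℕ) :
    (x, y + 2 * (m : ℝ)) ∈ periodicPts F := by
  have hα := hx.eq_zero_or_one
  have hβ := hy.eq_zero_or_one
  have h := minimalPeriod_F_iterate_four hx hy m
  have := minimalPeriod_F_cases (q := (x, y + 2 * (m : ℝ))) rfl rfl
  rw [← minimalPeriod_pos_iff_mem_periodicPts]
  omega

theorem minimalPeriod_F_mod_four_ne_three {x y : ℝ} {α β : ℤ}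
    (hx : IsSide x α) (hy : IsSide y β) (m : ℕ) (hne : α ≠ β) :
    minimalPeriod F (x, y + 2 * m) % 4 ≠ 3 := by
  intro h
  obtain ⟨a, ha⟩ := add_odd_of_mod_four_eq_three h iterate_minimalPeriod
  simp only at ha
  obtain ⟨h1, h2⟩ : (0 : ℝ) < a - m ∧ (a - m : ℝ) < 1 := by
    obtain ⟨hx0, hx2, ⟨rfl, hx⟩ | ⟨rfl, hx⟩⟩ := hx <;>
      obtain ⟨hy0, hy2, ⟨rfl, hy⟩ | ⟨rfl, hy⟩⟩ := hy <;>
      first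
      | exact absurd rfl hne
      | constructor <;> linarith
  have h1 : (0 : ℤ) < a - m := by exact_mod_cast h1
  have h2 : a - m < (1 : ℤ) := by exact_mod_cast h2
  omega

theorem IsSide.eq_of_half_odd {x : ℝ} {α a : ℤ} (h : IsSide x α) (ha : 2 * x = 1 + 2 * a) :
    x = 3 / 2 - α := by
  obtain ⟨h0, h2, h⟩ := h
  have ha0 : (-1 : ℝ) < a := by linarith
  have ha2 : (a : ℝ) < 2 := by linarith
  have ha0 : -1 < a := by exact_mod_cast ha0
  have ha2 : a < 2 := by exact_mod_cast ha2
  obtain rfl | rfl : a = 0 ∨ a = 1 := by omega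
  all_goals
    push_cast at ha
    rcases h with ⟨rfl, h⟩ | ⟨rfl, h⟩ <;> push_cast <;> linarith

theorem isSide_one_half : IsSide (1 / 2) 1 := ⟨by norm_num, by norm_num, by norm_num⟩

theorem isSide_three_halves : IsSide (3 / 2) 0 := ⟨by norm_num, by norm_num, by norm_num⟩

theorem minimalPeriod_F_one_half_dvd (m : ℕ) :
    minimalPeriod F ((1 / 2 : ℝ), (1 / 2 : ℝ) + 2 * m) ∣ 12 * m + 3 := by
  have h := F_iterate_eq_of_onPath isSide_one_half isSide_one_half m (t := 3 * m + 1)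
    (i := m) (j := 0) (by unfold OnPath; push_cast; omega)
  refine minimalPeriod_F_dvd_sub (a := 1) (b := 4 * (3 * m + 1)) (by omega) (h.trans ?_) |>.trans
    (by rw [show 4 * (3 * m + 1) - 1 = 12 * m + 3 by omega])
  have hs : s (1 / 2 + 2 * m) = 1 := if_pos (by positivity)
  simp only [iterate_one, F, hs]
  ext <;> push_cast <;> norm_num

theorem minimalPeriod_F_three_halves_dvd (m : ℕ) :
    minimalPeriod F ((3 / 2 : ℝ), (3 / 2 : ℝ) + 2 * m) ∣ 12 * m + 15 := by
  have h := F_iterate_eq_of_onPath isSide_three_halves isSide_three_halves m (t := 3 * m + 4)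
    (i := m) (j := -1) (by unfold OnPath; push_cast; omega)
  refine minimalPeriod_F_dvd_sub (a := 1) (b := 4 * (3 * m + 4)) (by omega) (h.trans ?_) |>.trans
    (by rw [show 4 * (3 * m + 4) - 1 = 12 * m + 15 by omega])
  have hs : s (3 / 2 + 2 * m) = 1 := if_pos (by positivity)
  simp only [iterate_one, F, hs]
  ext <;> push_cast <;> norm_num

theorem minimalPeriod_F_one_half_three_halves_dvd (m : ℕ) :
    minimalPeriod F ((1 / 2 : ℝ), (3 / 2 : ℝ) + 2 * m) ∣ 8 * m + 6 := by
  have h := F_iterate_eq_of_onPath isSide_one_half isSide_three_halves m (t := 2 * m + 2)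
    (i := 0) (j := -m - 1) (by unfold OnPath; push_cast; omega)
  refine minimalPeriod_F_dvd_sub (a := 2) (b := 4 * (2 * m + 2)) (by omega) (h.trans ?_) |>.trans
    (by rw [show 4 * (2 * m + 2) - 2 = 8 * m + 6 by omega])
  have hs : s (3 / 2 + 2 * m) = 1 := if_pos (by positivity)
  have hs' : s (-(1 / 2) + 1) = 1 := if_pos (by norm_num)
  simp only [iterate_succ, iterate_zero, comp_apply, id_eq, F, hs, hs']
  ext <;> push_cast
  · norm_num
  · ring

theorem F_eq_self_of_iterate_two {q : ℝ × ℝ} (h : F^[2] q = q) : F q = q := by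
  obtain ⟨x, y⟩ := q
  simp only [iterate_succ, iterate_zero, comp_apply, id_eq, F, Prod.mk.injEq] at h ⊢
  obtain ⟨h1, h2⟩ := h
  rw [h1] at h2
  have hxy : s x = s y := by
    by_cases hy : 0 ≤ y
    · have : s y = 1 := if_pos hy
      rw [this, s, if_pos (by linarith)]
    · have : s y = -1 := if_neg hy
      rw [this, s, if_neg (by linarith)]
  constructor <;> linarith

/-- The possible minimal periods of points of `F`. -/
def IsPeriod (p : ℕ) : Prop :=
  (∃ n, p = 4 * n + 1) ∨ (∃ n, p = 8 * n + 4) ∨ ∃ n, p = 8 * n + 6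

theorem isPeriod_minimalPeriod_section {x y : ℝ} {α β : ℤ} (hx : IsSide x α) (hy : IsSide y β)
    (m : ℕ) : IsPeriod (minimalPeriod F (x, y + 2 * m)) := by
  have hα := hx.eq_zero_or_one
  have hβ := hy.eq_zero_or_one
  have h4 := minimalPeriod_F_iterate_four hx hy m
  have h3 := minimalPeriod_F_mod_four_ne_three hx hy m
  have hper := iterate_minimalPeriod (f := F) (x := (x, y + 2 * (m : ℝ)))
  have hdvd : α = β → minimalPeriod F (x, y + 2 * m) % 4 ≠ 2 := by
    rintro rfl h2
    obtain ⟨a, b, ha, hb⟩ := half_odd_of_mod_four_eq_two h2 hper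
    obtain rfl := hx.eq_of_half_odd ha
    obtain rfl := hy.eq_of_half_odd (a := b - 2 * m) (by push_cast; linarith)
    rcases hα with rfl | rfl
    · have := minimalPeriod_F_three_halves_dvd m
      norm_num at h2
      have := (Nat.dvd_of_mod_eq_zero (show minimalPeriod F (3 / 2, 3 / 2 + 2 * (m : ℝ)) % 2 = 0 by
        omega)).trans this
      omega
    · have := minimalPeriod_F_one_half_dvd m
      norm_num at h2 this
      have := (Nat.dvd_of_mod_eq_zero (show minimalPeriod F (1 / 2, 1 / 2 + 2 * (m : ℝ)) % 2 = 0 by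
        omega)).trans this
      omega
  rcases minimalPeriod_F_cases (q := (x, y + 2 * (m : ℝ))) rfl rfl with h | h | h
  · exact .inr (.inl ⟨minimalPeriod F (x, y + 2 * m) / 8, by omega⟩)
  · exact .inr (.inr ⟨minimalPeriod F (x, y + 2 * m) / 8, by omega⟩)
  · exact .inl ⟨minimalPeriod F (x, y + 2 * m) / 4, by omega⟩

theorem mem_periodicPts_F_and_isPeriod (q : ℝ × ℝ) :
    q ∈ periodicPts F ∧ IsPeriod (minimalPeriod F q) := by
  obtain ⟨x, y⟩ := q
  obtain ⟨x, α, i, hx, rfl⟩ := exists_isSide_add x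
  obtain ⟨y, β, j, hy, rfl⟩ := exists_isSide_add y
  rcases exists_iterate_eq_or_isFixedPt hx hy i j with ⟨m, t, h⟩ | h
  · have hmem := mem_periodicPts_F hx hy m
    rw [h, minimalPeriod_apply_iterate hmem]
    refine ⟨?_, isPeriod_minimalPeriod_section hx hy m⟩
    rw [← minimalPeriod_pos_iff_mem_periodicPts, minimalPeriod_apply_iterate hmem]
    exact minimalPeriod_pos_of_mem_periodicPts hmem
  · have hper : IsPeriodicPt F 4 (x + 2 * (i : ℝ), y + 2 * (j : ℝ)) := h
    refine ⟨⟨4, by norm_num, hper⟩, ?_⟩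
    have hdvd := hper.minimalPeriod_dvd
    have hle := Nat.le_of_dvd (by norm_num) hdvd
    have hself := iterate_minimalPeriod (f := F) (x := (x + 2 * (i : ℝ), y + 2 * (j : ℝ)))
    generalize hp : minimalPeriod F (x + 2 * (i : ℝ), y + 2 * (j : ℝ)) = p at *
    interval_cases p
    · omega
    · exact .inl ⟨0, rfl⟩
    · have := minimalPeriod_eq_one_iff_isFixedPt.2 (F_eq_self_of_iterate_two hself)
      omega
    · omega
    · exact .inr (.inl ⟨0, rfl⟩)

theorem exists_minimalPeriod_eq_four_mul_add_one (n : ℕ) :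
    ∃ q, minimalPeriod F q = 4 * n + 1 := by
  refine ⟨(1 / 2, 1 / 2 + 2 * n), ?_⟩
  have hdvd := minimalPeriod_F_one_half_dvd n
  have h4 := minimalPeriod_F_iterate_four isSide_one_half isSide_one_half n
  have hcases := minimalPeriod_F_cases (q := ((1 / 2 : ℝ), (1 / 2 : ℝ) + 2 * n)) rfl rfl
  have hodd : minimalPeriod F ((1 / 2 : ℝ), (1 / 2 : ℝ) + 2 * n) % 2 ≠ 0 := fun h => by
    have := (Nat.dvd_of_mod_eq_zero h).trans hdvd
    omega
  omega

theorem exists_minimalPeriod_eq_eight_mul_add_six (n : ℕ) :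
    ∃ q, minimalPeriod F q = 8 * n + 6 := by
  refine ⟨(1 / 2, 3 / 2 + 2 * n), ?_⟩
  have hdvd := minimalPeriod_F_one_half_three_halves_dvd n
  have h4 := minimalPeriod_F_iterate_four isSide_one_half isSide_three_halves n
  have h3 := minimalPeriod_F_mod_four_ne_three isSide_one_half isSide_three_halves n (by norm_num)
  have hcases := minimalPeriod_F_cases (q := ((1 / 2 : ℝ), (3 / 2 : ℝ) + 2 * n)) rfl rfl
  have hodd : minimalPeriod F ((1 / 2 : ℝ), (3 / 2 : ℝ) + 2 * n) % 4 ≠ 0 := fun h => by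
    have := (Nat.dvd_of_mod_eq_zero h).trans hdvd
    omega
  omega

theorem minimalPeriod_F_zero_left {y : ℝ} {β : ℤ} (hy : IsSide y β) (m : ℕ) :
    (minimalPeriod F ((0 : ℝ), y + 2 * m) : ℤ) = 4 * (4 * m + 3 - 2 * β) := by
  have hx : IsSide 0 1 := ⟨by norm_num, by norm_num, by norm_num⟩
  have h4 := minimalPeriod_F_iterate_four hx hy m
  have hcases := minimalPeriod_F_cases (q := ((0 : ℝ), y + 2 * m)) rfl rfl
  have hper := iterate_minimalPeriod (f := F) (x := ((0 : ℝ), y + 2 * m))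
  have hne : ∀ k, k % 4 = 2 → F^[k] ((0 : ℝ), y + 2 * m) ≠ (0, y + 2 * m) := fun k hk h => by
    obtain ⟨a, b, ha, -⟩ := half_odd_of_mod_four_eq_two hk h
    simp only [mul_zero] at ha
    have : 0 = 1 + 2 * a := by exact_mod_cast ha
    omega
  have h2 : minimalPeriod F ((0 : ℝ), y + 2 * m) % 4 ≠ 2 := fun h => hne _ h hper
  have h1 : minimalPeriod F ((0 : ℝ), y + 2 * m) % 2 ≠ 1 := fun h =>
    hne (minimalPeriod F ((0 : ℝ), y + 2 * m) * 2) (by omega)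
      ((isPeriodicPt_minimalPeriod F _).mul_const 2)
  omega

theorem exists_minimalPeriod_eq_eight_mul_add_four (n : ℕ) :
    ∃ q, minimalPeriod F q = 8 * n + 4 := by
  rcases Nat.even_or_odd' n with ⟨m, rfl | rfl⟩
  · have := minimalPeriod_F_zero_left isSide_one_half m
    exact ⟨(0, 1 / 2 + 2 * m), by omega⟩
  · have := minimalPeriod_F_zero_left isSide_three_halves m
    exact ⟨(0, 3 / 2 + 2 * m), by omega⟩

/-- `F` is pointwise periodic, and its set of minimal periods equals
`{4n+1} ∪ {8n+4} ∪ {8n+6}` for `n ∈ ℕ₀`. -/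
theorem pointwise_periodic_and_periods_pi_div_two :
    (∀ q : ℝ × ℝ, ∃ p : ℕ, 1 ≤ p ∧ F^[p] q = q) ∧
    {p : ℕ | ∃ q : ℝ × ℝ, Function.minimalPeriod F q = p} =
      {p : ℕ | ∃ n : ℕ, p = 4 * n + 1} ∪
      {p : ℕ | ∃ n : ℕ, p = 8 * n + 4} ∪
      {p : ℕ | ∃ n : ℕ, p = 8 * n + 6} := by
  refine ⟨fun q => ?_, ?_⟩
  · obtain ⟨p, hp, h⟩ := (mem_periodicPts_F_and_isPeriod q).1
    exact ⟨p, hp, h⟩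
  · ext p
    simp only [Set.mem_union, Set.mem_ofPred_eq, or_assoc]
    constructor
    · rintro ⟨q, rfl⟩
      exact (mem_periodicPts_F_and_isPeriod q).2
    · rintro (⟨n, rfl⟩ | ⟨n, rfl⟩ | ⟨n, rfl⟩)
      · exact exists_minimalPeriod_eq_four_mul_add_one n
      · exact exists_minimalPeriod_eq_eight_mul_add_four n
      · exact exists_minimalPeriod_eq_eight_mul_add_six n
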